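/- For every integer l with 1 ≤ l ≤ d = (p−1)(q−1)/2 there exists a tuple α ∈ K^I such that the curve C_α of type p,q is a nodal curve with exactly l nodes, i.e., C_α has exactly l singular points and every singular point of C_α is a node. -/

import Mathlib

/-!
Let `C_n` be the Chebyshev polynomial with `C_n(x + x⁻¹) = x ^ n + x ^ (-n)`, and `(n + 1) S_n` the
derivative of `C_{n+1}`. Over `ℝ` the polynomial `C_p(Y) - C_q(X)` has `(p - 1)(q - 1)`
nondegenerate critical points, with values in `{-4, 0, 4}`, and at least half of the values vanish.
The polynomials of weight `νp + μq < pq` separate the critical points of value zero: such points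
are separated by the products `S_i(X) S_j(Y)` with `i < q - 1` and `j < p - 1`, and on them
`S_i(X) S_j(Y)` agrees with `S_{q-2-i}(X) S_{p-2-j}(Y)`, where one of the two products has small
weight. By the implicit function theorem nondegenerate critical points persist under small
perturbations of low weight, and separation makes their values independent parameters; so exactly
`l` of them can be kept on the curve.

The existence of such a configuration is a system of polynomial equations and inequations over `ℚ`,
so it passes from `ℝ` to every algebraically closed field of characteristic zero. A Weierstraß
polynomial of type `p, q` has at most `(p - 1)(q - 1)` critical points, so no further singular
points occur.
-/

open MvPolynomial

/-- The index set `I` of pairs `(ν,μ)` of nonnegative integers with `νp + μq < pq`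
(for `p, q ≥ 1` the conditions `ν < q`, `μ < p` are automatic). -/
def idxSet (p q : ℕ) : Finset (ℕ × ℕ) :=
  (Finset.range q ×ˢ Finset.range p).filter fun t => t.1 * p + t.2 * q < p * q

/-- The normed Weierstraß polynomial `F_α = Y^p − X^q + Σ a_{νμ} X^ν Y^μ`,
as a polynomial in two variables `X 0 = X`, `X 1 = Y`. -/
noncomputable def wPoly (K : Type) [CommRing K] (p q : ℕ) (a : idxSet p q → K) :
    MvPolynomial (Fin 2) K :=
  X 1 ^ p - X 0 ^ q + ∑ i : idxSet p q, C (a i) * X 0 ^ (i : ℕ × ℕ).1 * X 1 ^ (i : ℕ × ℕ).2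

/-- The Hessian determinant `G_{XX} G_{YY} − G_{XY}²` of a polynomial in `X, Y`. -/
noncomputable def hessPoly (K : Type) [CommRing K] (G : MvPolynomial (Fin 2) K) :
    MvPolynomial (Fin 2) K :=
  pderiv 0 (pderiv 0 G) * pderiv 1 (pderiv 1 G) - (pderiv 0 (pderiv 1 G)) ^ 2

/-- `P` is a singular point of the curve `G = 0`. -/
def IsSingAt (K : Type) [CommRing K] (G : MvPolynomial (Fin 2) K) (P : K × K) : Prop :=
  eval ![P.1, P.2] G = 0 ∧ eval ![P.1, P.2] (pderiv 0 G) = 0 ∧ eval ![P.1, P.2] (pderiv 1 G) = 0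

/-- `P` is a node of the curve `G = 0`. -/
def IsNodeAt (K : Type) [CommRing K] (G : MvPolynomial (Fin 2) K) (P : K × K) : Prop :=
  IsSingAt K G P ∧ eval ![P.1, P.2] (hessPoly K G) ≠ 0

section Hessian

variable {σ R S : Type*} [CommRing R] [CommRing S]

theorem pderiv_pderiv_comm (i j : σ) (G : MvPolynomial σ R) :
    pderiv i (pderiv j G) = pderiv j (pderiv i G) := by
  classical
  have h : ⁅pderiv (R := R) i, pderiv (R := R) j⁆ = 0 :=
    derivation_ext fun k => by
      rw [Derivation.commutator_apply]
      simp [pderiv_X, Pi.single_apply, apply_ite]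
  rw [← sub_eq_zero, ← Derivation.commutator_apply, h, Derivation.zero_apply]

/-- The Hessian matrix of a polynomial. -/
noncomputable def hessian (G : MvPolynomial σ R) : Matrix σ σ (MvPolynomial σ R) :=
  Matrix.of fun i j => pderiv i (pderiv j G)

theorem map_hessian (f : R →+* S) (G : MvPolynomial σ R) :
    (hessian G).map (map f) = hessian (map f G) := by
  ext1 i j
  simp [hessian, pderiv_map]

theorem eval_comp_map (f : R →+* S) (P : σ → R) (G : MvPolynomial σ R) :
    eval (f ∘ P) (map f G) = f (eval P G) := by
  rw [eval_map, eval₂_comp]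

theorem eval_map_hessian_det [Fintype σ] [DecidableEq σ] (f : R →+* S) (P : σ → R)
    (G : MvPolynomial σ R) :
    eval (f ∘ P) (hessian (map f G)).det = f (eval P (hessian G).det) := by
  rw [← map_hessian, ← RingHom.mapMatrix_apply, ← RingHom.map_det, eval_comp_map]

variable [Fintype σ] [DecidableEq σ]

/-- `P` is a nondegenerate critical point of the polynomial `G`: a zero of the gradient at which
the Hessian determinant does not vanish. The value `G P` is unconstrained, so the nodes of `G = 0`
are the nondegenerate critical points of value zero. -/
structure IsNondegCritAt (G : MvPolynomial σ R) (P : σ → R) : Prop where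
  eval_pderiv : ∀ i, eval P (pderiv i G) = 0
  eval_hessian_det : eval P (hessian G).det ≠ 0

theorem isNondegCritAt_map_iff (f : R →+* S) (G : MvPolynomial σ R) (P : σ → R) :
    IsNondegCritAt (map f G) (f ∘ P) ↔
      (∀ i, f (eval P (pderiv i G)) = 0) ∧ f (eval P (hessian G).det) ≠ 0 := by
  rw [← eval_map_hessian_det]
  simp_rw [← eval_comp_map, ← pderiv_map]
  exact ⟨fun h => ⟨h.1, h.2⟩, fun h => ⟨h.1, h.2⟩⟩

end Hessian

section Plane

variable {R : Type} [CommRing R] (G : MvPolynomial (Fin 2) R) (P : Fin 2 → R)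

theorem hessPoly_eq_hessian_det : hessPoly R G = (hessian G).det := by
  rw [Matrix.det_fin_two, hessPoly]
  simp only [hessian, Matrix.of_apply]
  rw [pderiv_pderiv_comm 1 0, sq]

theorem isSingAt_piFinTwoEquiv_iff :
    IsSingAt R G (piFinTwoEquiv (fun _ => R) P) ↔
      eval P G = 0 ∧ ∀ i, eval P (pderiv i G) = 0 := by
  have hP : ![(piFinTwoEquiv (fun _ => R) P).1, (piFinTwoEquiv (fun _ => R) P).2] = P :=
    (piFinTwoEquiv fun _ => R).symm_apply_apply P
  rw [Fin.forall_fin_two, IsSingAt, hP]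

theorem isNodeAt_piFinTwoEquiv_iff :
    IsNodeAt R G (piFinTwoEquiv (fun _ => R) P) ↔ eval P G = 0 ∧ IsNondegCritAt G P := by
  have hP : ![(piFinTwoEquiv (fun _ => R) P).1, (piFinTwoEquiv (fun _ => R) P).2] = P :=
    (piFinTwoEquiv fun _ => R).symm_apply_apply P
  rw [IsNodeAt, isSingAt_piFinTwoEquiv_iff, hP, hessPoly_eq_hessian_det, and_assoc]
  exact and_congr_right fun _ => ⟨fun h => ⟨h.1, h.2⟩, fun h => ⟨h.1, h.2⟩⟩

end Plane

section Weight

variable {σ R : Type*} [CommRing R] {w : σ → ℕ} {N : ℕ} {F : MvPolynomial σ R}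

/-- The polynomials all of whose monomials have weight less than `N`, where `X i` has weight
`w i`. For `w = ![p, q]` and `N = p * q` these are the lower-order terms of a normed Weierstraß
polynomial. -/
noncomputable def weightLT (R : Type*) [CommRing R] (w : σ → ℕ) (N : ℕ) :
    Submodule R (MvPolynomial σ R) :=
  restrictSupport R {s | Finsupp.weight w s < N}

theorem mem_weightLT_iff :
    F ∈ weightLT R w N ↔ ∀ s, coeff s F ≠ 0 → Finsupp.weight w s < N := by
  simp only [weightLT, mem_restrictSupport_iff, Set.subset_def, Finset.mem_coe, mem_support_iff,
    Set.mem_ofPred_eq]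

theorem monomial_mem_weightLT {s : σ →₀ ℕ} (hs : Finsupp.weight w s < N) (c : R) :
    monomial s c ∈ weightLT R w N :=
  (monomial_mem_restrictSupport R).2 (.inl hs)

theorem weightLT_le_iff {V : Submodule R (MvPolynomial σ R)} :
    weightLT R w N ≤ V ↔ ∀ s, Finsupp.weight w s < N → monomial s 1 ∈ V := by
  rw [weightLT, restrictSupport_eq_span, Submodule.span_le, Set.image_subset_iff]
  exact Iff.rfl

theorem pderiv_mem_weightLT {i : σ} (hF : F ∈ weightLT R w (N + w i)) :
    pderiv i F ∈ weightLT R w N := by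
  refine mem_weightLT_iff.2 fun s hs => ?_
  rw [coeff_pderiv] at hs
  have h := mem_weightLT_iff.1 hF _ (left_ne_zero_of_mul hs)
  rw [map_add, Finsupp.weight_single, one_smul] at h
  exact lt_of_add_lt_add_right h

theorem monomial_mul_mem_weightLT (s : σ →₀ ℕ) (hF : F ∈ weightLT R w N) :
    monomial s 1 * F ∈ weightLT R w (Finsupp.weight w s + N) := by
  have h : weightLT R w N ≤
      (weightLT R w (Finsupp.weight w s + N)).comap (LinearMap.mulLeft R (monomial s 1)) := by
    refine weightLT_le_iff.2 fun t ht => ?_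
    rw [Submodule.mem_comap, LinearMap.mulLeft_apply, monomial_mul]
    refine monomial_mem_weightLT ?_ _
    rw [map_add]
    exact Nat.add_lt_add_left ht _
  exact h hF

theorem restrictSupport_sup_span_eq_top {n : σ → ℕ} {f : σ → MvPolynomial σ R}
    (hf : ∀ i, f i - X i ^ n i ∈ weightLT R w (n i * w i)) :
    restrictSupport R {s : σ →₀ ℕ | ∀ i, s i < n i} ⊔
      (Ideal.span (Set.range f)).restrictScalars R = ⊤ := by
  set V := restrictSupport R {s : σ →₀ ℕ | ∀ i, s i < n i} ⊔
    (Ideal.span (Set.range f)).restrictScalars R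
  have hmono (N : ℕ) : ∀ s, Finsupp.weight w s = N → monomial s 1 ∈ V := by
    induction N using Nat.strong_induction_on with
    | _ N ih =>
    intro s hs
    by_cases hbox : ∀ i, s i < n i
    · exact Submodule.mem_sup_left ((monomial_mem_restrictSupport R).2 (.inl hbox))
    · push Not at hbox
      obtain ⟨i, hi⟩ := hbox
      obtain ⟨t, rfl⟩ := exists_add_of_le (Finsupp.single_le_iff.2 hi)
      rw [add_comm, map_add, Finsupp.weight_single, smul_eq_mul] at hs
      have hred : monomial (Finsupp.single i (n i) + t) (1 : R) =
          monomial t 1 * f i - monomial t 1 * (f i - X i ^ n i) := by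
        rw [add_comm, monomial_add_single]
        ring
      rw [hred]
      refine sub_mem (Submodule.mem_sup_right ?_) ?_
      · exact Ideal.mul_mem_left _ _ (Ideal.subset_span ⟨i, rfl⟩)
      · have hlow := monomial_mul_mem_weightLT t (hf i)
        rw [hs] at hlow
        exact weightLT_le_iff.2 (fun u hu => ih _ hu u rfl) hlow
  rw [eq_top_iff, ← restrictSupport_univ, restrictSupport_eq_span, Submodule.span_le]
  rintro _ ⟨s, -, rfl⟩
  exact hmono _ s rfl

end Weight

section CommonZeros

variable {σ ι k : Type*} [Field k]

theorem linearIndependent_eval {P : ι → σ → k} (hP : Function.Injective P) :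
    LinearIndependent k fun i (F : MvPolynomial σ k) => eval (P i) F := by
  have hinj : Function.Injective fun i => (eval (P i) : MvPolynomial σ k →* k) := by
    refine fun i j hij => hP (funext fun s => ?_)
    simpa using DFunLike.congr_fun hij (X s)
  exact (linearIndependent_monoidHom (MvPolynomial σ k) k).comp _ hinj

variable [Fintype σ] [Fintype ι] {w : σ → ℕ}

/-- The monomials in the box `∀ i, s i < n i` span modulo the `f i`, so evaluations at common
zeros are already independent on them. -/
theorem card_commonZeros_le {n : σ → ℕ} {f : σ → MvPolynomial σ k}
    (hf : ∀ i, f i - X i ^ n i ∈ weightLT k w (n i * w i))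
    {P : ι → σ → k} (hP : Function.Injective P) (hzero : ∀ j i, eval (P j) (f i) = 0) :
    Fintype.card ι ≤ ∏ i, n i := by
  classical
  have hindep : LinearIndependent k fun j (b : ∀ i, Fin (n i)) => ∏ i, P j i ^ (b i : ℕ) := by
    refine Fintype.linearIndependent_iff.2 fun c hc => ?_
    let L : MvPolynomial σ k →ₗ[k] k := ∑ j, c j • (aeval (P j)).toLinearMap
    have hL (F) : L F = ∑ j, c j * eval (P j) F := by
      simp [L, aeval_eq_eval]
    have hker : restrictSupport k {s : σ →₀ ℕ | ∀ i, s i < n i} ⊔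
        (Ideal.span (Set.range f)).restrictScalars k ≤ LinearMap.ker L := by
      refine sup_le ?_ fun F hF => ?_
      · rw [restrictSupport_eq_span, Submodule.span_le]
        rintro _ ⟨s, hs, rfl⟩
        simpa [hL, eval_monomial, Finsupp.prod_fintype] using
          congrFun hc fun i => ⟨s i, hs i⟩
      · have hvanish (j) : Ideal.span (Set.range f) ≤ RingHom.ker (eval (P j)) :=
          Ideal.span_le.2 (Set.range_subset_iff.2 fun i => hzero j i)
        rw [LinearMap.mem_ker, hL]
        exact Finset.sum_eq_zero fun j _ => by rw [RingHom.mem_ker.1 (hvanish j hF), mul_zero]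
    rw [restrictSupport_sup_span_eq_top hf, top_le_iff, LinearMap.ker_eq_top] at hker
    have heval := linearIndependent_eval hP
    rw [Fintype.linearIndependent_iff] at heval
    refine heval c (funext fun F => ?_)
    simpa only [Finset.sum_apply, Pi.smul_apply, smul_eq_mul, Pi.zero_apply, hL,
      LinearMap.zero_apply] using LinearMap.congr_fun hker F
  simpa using hindep.fintype_card_le_finrank

variable {N : ℕ} {d : σ → ℕ} {c : σ → k}

theorem pderiv_sum_C_mul_X_pow (i : σ) :
    pderiv i (∑ j, C (c j) * X j ^ d j) = C (c i * d i) * X i ^ (d i - 1) := by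
  classical
  rw [map_sum, Finset.sum_eq_single i]
  · simp [mul_assoc]
  · intro j _ hj
    simp [pderiv_X_of_ne hj]
  · simp

theorem card_critical_le (hd : ∀ i, d i * w i = N) (hc : ∀ i, c i * d i ≠ 0)
    {G : MvPolynomial σ k} (hG : G - ∑ j, C (c j) * X j ^ d j ∈ weightLT k w N)
    {P : ι → σ → k} (hP : Function.Injective P) (hcrit : ∀ j i, eval (P j) (pderiv i G) = 0) :
    Fintype.card ι ≤ ∏ i, (d i - 1) := by
  classical
  refine card_commonZeros_le (w := w) (f := fun i => C (c i * d i)⁻¹ * pderiv i G) (fun i => ?_)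
    hP fun j i => by rw [map_mul, hcrit, mul_zero]
  have hweight : (d i - 1) * w i + w i = N := by
    have hdi : d i ≠ 0 := fun h => hc i (by rw [h, Nat.cast_zero, mul_zero])
    rw [← hd i, ← Nat.succ_mul, Nat.succ_eq_add_one,
      Nat.sub_add_cancel (Nat.one_le_iff_ne_zero.2 hdi)]
  have hlead : C (c i * d i)⁻¹ * pderiv i (G - ∑ j, C (c j) * X j ^ d j) =
      C (c i * d i)⁻¹ * pderiv i G - X i ^ (d i - 1) := by
    rw [map_sub, pderiv_sum_C_mul_X_pow, mul_sub, ← mul_assoc, ← C_mul, inv_mul_cancel₀ (hc i),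
      C_1, one_mul]
  rw [← hlead, C_mul']
  exact Submodule.smul_mem _ _ (pderiv_mem_weightLT (by rwa [hweight]))

end CommonZeros

section WeierstrassPolynomial

variable {R S : Type} [CommRing R] [CommRing S] {p q : ℕ}

theorem map_wPoly (f : R →+* S) (a : idxSet p q → R) :
    map f (wPoly R p q a) = wPoly S p q (f ∘ a) := by
  simp [wPoly]

theorem mem_idxSet_iff {t : ℕ × ℕ} :
    t ∈ idxSet p q ↔ t.1 * p + t.2 * q < p * q := by
  simp only [idxSet, Finset.mem_filter, Finset.mem_product, Finset.mem_range,
    and_iff_right_iff_imp]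
  exact fun h => ⟨by nlinarith, by nlinarith⟩

theorem weightLT_eq_span_range :
    weightLT R ![p, q] (p * q) =
      Submodule.span R (Set.range fun t : idxSet p q =>
        (X 0 ^ (t : ℕ × ℕ).1 * X 1 ^ (t : ℕ × ℕ).2 : MvPolynomial (Fin 2) R)) := by
  have hweight (s : Fin 2 →₀ ℕ) : Finsupp.weight ![p, q] s = s 0 * p + s 1 * q := by
    simp [Finsupp.weight_eq_sum]
  have hmonomial (s : Fin 2 →₀ ℕ) :
      (monomial s 1 : MvPolynomial (Fin 2) R) = X 0 ^ s 0 * X 1 ^ s 1 := by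
    simp [monomial_eq, Finsupp.prod_fintype]
  refine le_antisymm (weightLT_le_iff.2 fun s hs => ?_) (Submodule.span_le.2 ?_)
  · rw [hweight, ← mem_idxSet_iff (t := (s 0, s 1))] at hs
    exact Submodule.subset_span ⟨⟨_, hs⟩, (hmonomial s).symm⟩
  · rintro _ ⟨⟨t, ht⟩, rfl⟩
    have ht' : Finsupp.weight ![p, q] (Finsupp.equivFunOnFinite.symm ![t.1, t.2]) < p * q := by
      simpa [hweight] using mem_idxSet_iff.1 ht
    simpa [hmonomial] using monomial_mem_weightLT (R := R) ht' 1

theorem exists_wPoly_eq_iff {F : MvPolynomial (Fin 2) R} :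
    (∃ a, wPoly R p q a = F) ↔ F - (X 1 ^ p - X 0 ^ q) ∈ weightLT R ![p, q] (p * q) := by
  rw [weightLT_eq_span_range, Submodule.mem_span_range_iff_exists_fun]
  refine exists_congr fun a => ?_
  simp only [wPoly, ← C_mul', ← mul_assoc]
  rw [eq_sub_iff_add_eq', eq_comm]

theorem card_critical_wPoly_le {k : Type} [Field k] [CharZero k] (hp : 0 < p) (hq : 0 < q)
    (a : idxSet p q → k) {ι : Type*} [Fintype ι] {P : ι → Fin 2 → k}
    (hP : Function.Injective P) (hcrit : ∀ j i, eval (P j) (pderiv i (wPoly k p q a)) = 0) :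
    Fintype.card ι ≤ (q - 1) * (p - 1) := by
  have hlow := exists_wPoly_eq_iff.1 ⟨a, rfl⟩
  have hbound := card_critical_le (w := ![p, q]) (N := p * q) (d := ![q, p]) (c := ![-1, 1])
    (Fin.forall_fin_two.2 ⟨mul_comm q p, rfl⟩)
    (Fin.forall_fin_two.2 ⟨by simpa using hq.ne', by simpa using hp.ne'⟩)
    (by simpa [Fin.sum_univ_two, ← sub_eq_neg_add] using hlow) hP hcrit
  simpa [Fin.prod_univ_two] using hbound

end WeierstrassPolynomial

section PartialSmoothing

open Filter Topology

theorem exists_eq_smul_of_hasStrictFDerivAt {𝕜 E E' : Type*} [NontriviallyNormedField 𝕜]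
    [NormedAddCommGroup E] [NormedSpace 𝕜 E] [CompleteSpace E]
    [NormedAddCommGroup E'] [NormedSpace 𝕜 E'] [CompleteSpace E']
    {Φ : E → E'} {Φ' : E →L[𝕜] E'} {z₀ : E} (hΦ : HasStrictFDerivAt Φ Φ' z₀)
    (hsurj : Function.Surjective Φ') (hzero : Φ z₀ = 0) {p : E → Prop}
    (hp : ∀ᶠ z in 𝓝 z₀, p z) (w : E') :
    ∃ ε : 𝕜, ε ≠ 0 ∧ ∃ z, p z ∧ Φ z = ε • w := by
  have himage := image_mem_map (m := Φ) hp
  rw [hΦ.map_nhds_eq_of_surj (LinearMap.range_eq_top.2 hsurj), hzero] at himage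
  have hline : Tendsto (fun ε : 𝕜 => ε • w) (𝓝[≠] 0) (𝓝 0) :=
    ((continuous_id.smul continuous_const).tendsto' 0 0 (zero_smul _ _)).mono_left
      nhdsWithin_le_nhds
  obtain ⟨ε, ⟨z, hz, hΦz⟩, hε⟩ := ((hline.eventually himage).and self_mem_nhdsWithin).exists
  exact ⟨ε, hε, z, hz, hΦz⟩

theorem eventually_injective {ι X : Type*} [Finite ι] [TopologicalSpace X] [T2Space X] {P : ι → X}
    (hP : Function.Injective P) : ∀ᶠ Q in 𝓝 P, Function.Injective Q := by
  have hne (i j : ι) (hij : i ≠ j) : ∀ᶠ Q : ι → X in 𝓝 P, Q i ≠ Q j :=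
    ((continuous_apply i).continuousAt.ne_iff_eventually_ne (continuous_apply j).continuousAt).1
      (hP.ne hij)
  refine (eventually_all.2 fun i => eventually_all.2 fun j =>
    eventually_imp_distrib_left.2 (hne i j)).mono fun Q hQ i j hij => ?_
  exact not_imp_not.1 (hQ i j) hij

section Deformation

variable {σ τ R : Type*} [Fintype τ] [CommRing R]

/-- The member of the linear system `F + ⟨M s⟩` with coordinates `b`. -/
noncomputable def deformation (F : MvPolynomial σ R) (M : τ → MvPolynomial σ R) (b : τ → R) :
    MvPolynomial σ R :=
  F + ∑ s, b s • M s

theorem deformation_zero (F : MvPolynomial σ R) (M : τ → MvPolynomial σ R) :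
    deformation F M 0 = F := by
  simp [deformation]

theorem eval_deformation (F : MvPolynomial σ R) (M : τ → MvPolynomial σ R) (b : τ → R)
    (x : σ → R) : eval x (deformation F M b) = eval x F + ∑ s, b s * eval x (M s) := by
  simp [deformation, smul_eval]

theorem pderiv_deformation (F : MvPolynomial σ R) (M : τ → MvPolynomial σ R) (b : τ → R) (k : σ) :
    pderiv k (deformation F M b) = deformation (pderiv k F) (fun s => pderiv k (M s)) b := by
  simp [deformation]

end Deformation

variable {𝕜 σ τ ι : Type*} [NontriviallyNormedField 𝕜] [Fintype σ] [Fintype τ]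

/-- The continuous linear form with coefficients `c`; for partial derivatives `c` it is the
differential of a polynomial. -/
noncomputable def linearForm (c : σ → 𝕜) : (σ → 𝕜) →L[𝕜] 𝕜 :=
  ∑ k, c k • ContinuousLinearMap.proj k

theorem linearForm_apply (c v : σ → 𝕜) : linearForm c v = ∑ k, c k * v k := by
  simp [linearForm]

theorem hasStrictFDerivAt_eval (F : MvPolynomial σ 𝕜) (x : σ → 𝕜) :
    HasStrictFDerivAt (fun y => eval y F) (linearForm fun k => eval x (pderiv k F)) x := by
  classical
  induction F using MvPolynomial.induction_on with
  | C c =>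
    simp only [eval_C]
    refine (hasStrictFDerivAt_const c x).congr_fderiv (ContinuousLinearMap.ext fun v => ?_)
    simp [linearForm_apply]
  | add F G hF hG =>
    simp only [eval_add]
    refine (hF.fun_add hG).congr_fderiv (ContinuousLinearMap.ext fun v => ?_)
    simp [linearForm_apply, add_mul, Finset.sum_add_distrib]
  | mul_X F k hF =>
    simp only [eval_mul, eval_X]
    refine (hF.mul (hasStrictFDerivAt_apply k x)).congr_fderiv (ContinuousLinearMap.ext fun v => ?_)
    simp [linearForm_apply, pderiv_X, Pi.single_apply, apply_ite, add_mul, Finset.sum_add_distrib,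
      Finset.mul_sum, mul_assoc]

theorem hasStrictFDerivAt_eval_deformation (F : MvPolynomial σ 𝕜) (M : τ → MvPolynomial σ 𝕜)
    (x : σ → 𝕜) :
    HasStrictFDerivAt (fun z : (τ → 𝕜) × (σ → 𝕜) => eval z.2 (deformation F M z.1))
      ((linearForm fun s => eval x (M s)).coprod (linearForm fun k => eval x (pderiv k F)))
      (0, x) := by
  have hcoord (s : τ) := ((ContinuousLinearMap.proj s).comp
    (.fst 𝕜 (τ → 𝕜) (σ → 𝕜))).hasStrictFDerivAt (x := (0, x))
  have heval (G : MvPolynomial σ 𝕜) :=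
    (hasStrictFDerivAt_eval G x).comp (0, x) (hasStrictFDerivAt_snd (𝕜 := 𝕜) (E := τ → 𝕜))
  simp only [eval_deformation]
  refine ((heval F).add (.fun_sum fun s _ => (hcoord s).mul (heval (M s)))).congr_fderiv
    (ContinuousLinearMap.ext fun v => ?_)
  simp [linearForm_apply, add_comm]

/-- The values at the points `Q (e s)` and the gradients at all points `Q i` of the deformation of
`F` with coordinates `b`, as a function of `(b, Q)`. -/
noncomputable def valueGradient (F : MvPolynomial σ 𝕜) (M : τ → MvPolynomial σ 𝕜) (e : τ → ι)
    (z : (τ → 𝕜) × (ι → σ → 𝕜)) : (τ → 𝕜) × (ι → σ → 𝕜) :=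
  (fun s => eval (z.2 (e s)) (deformation F M z.1),
    fun i k => eval (z.2 i) (pderiv k (deformation F M z.1)))

variable [DecidableEq σ] {F : MvPolynomial σ 𝕜}

theorem IsNondegCritAt.exists_sum_hessian_mul_eq {x : σ → 𝕜} (hx : IsNondegCritAt F x)
    (u : σ → 𝕜) : ∃ v : σ → 𝕜, ∀ k, ∑ j, eval x (pderiv j (pderiv k F)) * v j = u k := by
  let A : Matrix σ σ 𝕜 := (hessian F).map (eval x)
  have hA : IsUnit A.det := by
    rw [show A = (eval x).mapMatrix (hessian F) from rfl, ← RingHom.map_det]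
    exact hx.eval_hessian_det.isUnit
  refine ⟨Matrix.vecMul u A⁻¹, fun k => ?_⟩
  have hsolve : Matrix.vecMul (Matrix.vecMul u A⁻¹) A = u := by
    rw [Matrix.vecMul_vecMul, Matrix.nonsing_inv_mul _ hA, Matrix.vecMul_one]
  refine Eq.trans (Finset.sum_congr rfl fun j _ => ?_) (congrFun hsolve k)
  exact mul_comm _ _

variable [Finite ι] {M : τ → MvPolynomial σ 𝕜} {e : τ → ι} {P : ι → σ → 𝕜}

theorem exists_hasStrictFDerivAt_valueGradient_surjective [DecidableEq τ]
    (hP : ∀ i, IsNondegCritAt F (P i))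
    (hM : ∀ s t, eval (P (e s)) (M t) = if s = t then 1 else 0) :
    ∃ Φ' : (τ → 𝕜) × (ι → σ → 𝕜) →L[𝕜] (τ → 𝕜) × (ι → σ → 𝕜),
      HasStrictFDerivAt (valueGradient F M e) Φ' (0, P) ∧ Function.Surjective Φ' := by
  cases nonempty_fintype ι
  let π (i : ι) : (τ → 𝕜) × (ι → σ → 𝕜) →L[𝕜] (τ → 𝕜) × (σ → 𝕜) :=
    (ContinuousLinearMap.fst 𝕜 _ _).prod
      ((ContinuousLinearMap.proj i).comp (ContinuousLinearMap.snd 𝕜 _ _))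
  have hπ (i : ι) (G) (L : τ → MvPolynomial σ 𝕜) :=
    (hasStrictFDerivAt_eval_deformation G L (P i)).comp (0, P) (π i).hasStrictFDerivAt
  have hderiv := (hasStrictFDerivAt_pi.2 fun s => hπ (e s) F M).prodMk
    (hasStrictFDerivAt_pi.2 fun i => hasStrictFDerivAt_pi.2 fun k =>
      hπ i (pderiv k F) fun s => pderiv k (M s))
  refine ⟨_, hderiv.congr_of_eventuallyEq (.of_forall fun z => ?_), fun y => ?_⟩
  · simp only [valueGradient, pderiv_deformation]
    rfl
  · choose v hv using fun i => (hP i).exists_sum_hessian_mul_eq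
      (fun k => y.2 i k - ∑ s, eval (P i) (pderiv k (M s)) * y.1 s)
    refine ⟨(y.1, v), Prod.ext (funext fun s => ?_) (funext fun i => funext fun k => ?_)⟩
    · simp [π, linearForm_apply, (hP _).eval_pderiv, hM]
    · simp [π, linearForm_apply, hv]

theorem eventually_deformation_nondegenerate (hinj : Function.Injective P)
    (hP : ∀ i, IsNondegCritAt F (P i)) :
    ∀ᶠ z : (τ → 𝕜) × (ι → σ → 𝕜) in 𝓝 (0, P), Function.Injective z.2 ∧
      (∀ i, eval (z.2 i) (hessian (deformation F M z.1)).det ≠ 0) ∧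
      ∀ i, eval (P i) F ≠ 0 → eval (z.2 i) (deformation F M z.1) ≠ 0 := by
  have hcont (G) (L : τ → MvPolynomial σ 𝕜) (i : ι) : Continuous
      fun z : (τ → 𝕜) × (ι → σ → 𝕜) => eval (z.2 i) (deformation G L z.1) := by
    simp only [eval_deformation]
    have heval (H : MvPolynomial σ 𝕜) :
        Continuous fun z : (τ → 𝕜) × (ι → σ → 𝕜) => eval (z.2 i) H :=
      H.continuous_eval.comp (by fun_prop)
    fun_prop
  have hdet (i : ι) : Continuous
      fun z : (τ → 𝕜) × (ι → σ → 𝕜) => eval (z.2 i) (hessian (deformation F M z.1)).det := by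
    simp only [RingHom.map_det]
    refine Continuous.matrix_det (continuous_matrix fun j k => ?_)
    simpa only [hessian, RingHom.mapMatrix_apply, Matrix.map_apply, Matrix.of_apply,
      pderiv_deformation] using hcont _ _ i
  refine .and ?_ (.and (eventually_all.2 fun i => ?_) (eventually_all.2 fun i => ?_))
  · exact continuous_snd.continuousAt.eventually (eventually_injective hinj)
  · refine (hdet i).continuousAt.eventually_ne ?_
    simpa only [deformation_zero] using (hP i).eval_hessian_det
  · refine eventually_imp_distrib_left.2 fun hi => (hcont F M i).continuousAt.eventually_ne ?_
    simpa only [deformation_zero] using hi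

theorem exists_partial_smoothing [CompleteSpace 𝕜] (hinj : Function.Injective P)
    (hP : ∀ i, IsNondegCritAt F (P i)) {W : Submodule 𝕜 (MvPolynomial σ 𝕜)}
    (hsep : ∀ i, eval (P i) F = 0 →
      ∃ M ∈ W, eval (P i) M = 1 ∧ ∀ j ≠ i, eval (P j) F = 0 → eval (P j) M = 0)
    {S : Set ι} (hS : ∀ i ∈ S, eval (P i) F = 0) :
    ∃ H ∈ W, ∃ Q : ι → σ → 𝕜, Function.Injective Q ∧ (∀ i, IsNondegCritAt (F + H) (Q i)) ∧
      ∀ i, eval (Q i) (F + H) = 0 ↔ i ∈ S := by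
  classical
  cases nonempty_fintype ι
  let τ := {i // eval (P i) F = 0}
  choose M hMW hM1 hM0 using fun s : τ => hsep s.1 s.2
  obtain ⟨Φ', hΦ, hsurj⟩ := exists_hasStrictFDerivAt_valueGradient_surjective (M := M)
    (e := Subtype.val) hP fun s t => by
      split_ifs with hst
      · rw [hst, hM1]
      · exact hM0 t s (Subtype.coe_ne_coe.2 hst) s.2
  have hzero : valueGradient F M Subtype.val (0, P) = 0 := by
    refine Prod.ext (funext fun s => ?_) (funext fun i => funext fun k => ?_)
    · simpa [valueGradient, deformation_zero] using s.2
    · simpa [valueGradient, deformation_zero] using (hP i).eval_pderiv k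
  obtain ⟨ε, hε, ⟨b, Q⟩, ⟨hQ, hdet, hval⟩, hbQ⟩ := exists_eq_smul_of_hasStrictFDerivAt hΦ hsurj
    hzero (eventually_deformation_nondegenerate hinj hP) (fun s : τ => if s.1 ∈ S then 0 else 1, 0)
  refine ⟨∑ s, b s • M s, Submodule.sum_mem _ fun s _ => W.smul_mem _ (hMW s), Q, hQ,
    fun i => ⟨fun k => ?_, hdet i⟩, fun i => ?_⟩
  · have hgrad := congrFun (congrFun (congrArg Prod.snd hbQ) i) k
    rwa [Prod.smul_snd, smul_zero] at hgrad
  · by_cases hi : eval (P i) F = 0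
    · have hs : eval (Q i) (F + ∑ s, b s • M s) = ε * if i ∈ S then 0 else 1 :=
        congrFun (congrArg Prod.fst hbQ) ⟨i, hi⟩
      rw [hs]
      split_ifs with hiS <;> simp [hε, hiS]
    · exact iff_of_false (hval i hi) fun hiS => hi (hS i hiS)

end PartialSmoothing

section Transfer

theorem exists_algHom_of_finiteType (k A K : Type*) [Field k] [CommRing A] [Nontrivial A]
    [Algebra k A] [Algebra.FiniteType k A] [Field K] [IsAlgClosed K] [Algebra k K] :
    Nonempty (A →ₐ[k] K) := by
  obtain ⟨m, hm⟩ := Ideal.exists_maximal A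
  let _ : Field (A ⧸ m) := Ideal.Quotient.field m
  have : Module.Finite k (A ⧸ m) := finite_of_finite_type_of_isJacobsonRing k (A ⧸ m)
  exact ⟨(IsAlgClosed.lift : (A ⧸ m) →ₐ[k] K).comp (Ideal.Quotient.mkₐ k m)⟩

theorem exists_algHom_forall_eq_zero_iff {k R L : Type*} (K : Type*) [Field k] [CommRing R]
    [Algebra k R] [Algebra.FiniteType k R] [Field L] [Algebra k L] [Field K] [IsAlgClosed K]
    [Algebra k K] (ψ : R →ₐ[k] L) {V : Set R} (hV : V.Finite) :
    ∃ φ : R →ₐ[k] K, ∀ x ∈ V, φ x = 0 ↔ ψ x = 0 := by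
  let A := ψ.range ⊔ Algebra.adjoin k ((fun x => (ψ x)⁻¹) '' V)
  have hψA (x : R) : ψ x ∈ A := (le_sup_left : ψ.range ≤ A) ⟨x, rfl⟩
  have hrange : ψ.range.FG := by
    rw [← Algebra.map_top]
    exact .map ψ Algebra.FiniteType.out
  have hA : Algebra.FiniteType k A := A.fg_iff_finiteType.1 <|
    hrange.sup (Subalgebra.fg_def.2 ⟨_, hV.image _, rfl⟩)
  obtain ⟨χ⟩ := exists_algHom_of_finiteType k A K
  refine ⟨χ.comp (ψ.codRestrict A hψA), fun x hx => ⟨fun hzero => ?_, fun hzero => ?_⟩⟩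
  · by_contra hne
    have hinv : (ψ x)⁻¹ ∈ A := (le_sup_right : _ ≤ A) (Algebra.subset_adjoin ⟨x, hx, rfl⟩)
    have hunit : IsUnit (ψ.codRestrict A hψA x) :=
      .of_mul_eq_one ⟨_, hinv⟩ (Subtype.ext (mul_inv_cancel₀ hne))
    exact (hunit.map χ).ne_zero hzero
  · have hx0 : ψ.codRestrict A hψA x = 0 := Subtype.ext hzero
    rw [AlgHom.comp_apply, hx0, map_zero]

/-- The configuration is a specialization of the generic polynomial and generic points over the
polynomial ring `R`; specializing `R` to `K` instead preserves finitely many (in)equations. -/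
theorem exists_wPoly_nondegCrit_transfer {p q : ℕ} {ι L : Type} (K : Type) [Finite ι]
    [Field L] [CharZero L] [Field K] [IsAlgClosed K] [CharZero K] {a : idxSet p q → L}
    {Q : ι → Fin 2 → L} (hQ : Function.Injective Q)
    (hcrit : ∀ i, IsNondegCritAt (wPoly L p q a) (Q i)) :
    ∃ (b : idxSet p q → K) (P : ι → Fin 2 → K), Function.Injective P ∧
      (∀ i, IsNondegCritAt (wPoly K p q b) (P i)) ∧
      ∀ i, eval (P i) (wPoly K p q b) = 0 ↔ eval (Q i) (wPoly L p q a) = 0 := by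
  let R := MvPolynomial (idxSet p q ⊕ ι × Fin 2) ℚ
  let G : MvPolynomial (Fin 2) R := wPoly R p q fun s => X (.inl s)
  let T (i : ι) (j : Fin 2) : R := X (.inr (i, j))
  let ψ : R →ₐ[ℚ] L := aeval (Sum.elim a fun e => Q e.1 e.2)
  have hψG : map (ψ : R →+* L) G = wPoly L p q a := by
    rw [map_wPoly]
    exact congrArg (wPoly L p q) (funext fun s => aeval_X _ _)
  have hψT (i : ι) : (ψ : R →+* L) ∘ T i = Q i := funext fun j => aeval_X _ _
  have hV : (Set.range (fun i => eval (T i) G) ∪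
      Set.range (fun e : ι × Fin 2 => eval (T e.1) (pderiv e.2 G)) ∪
      Set.range (fun i => eval (T i) (hessian G).det) ∪
      Set.range (fun e : (ι × ι) × Fin 2 => T e.1.1 e.2 - T e.1.2 e.2)).Finite := by
    simp only [Set.finite_union, Set.finite_range, and_self]
  obtain ⟨φ, hφ⟩ := exists_algHom_forall_eq_zero_iff K ψ hV
  have hφG : map (φ : R →+* K) G = wPoly K p q fun s => φ (X (.inl s)) := map_wPoly _ _
  refine ⟨fun s => φ (X (.inl s)), fun i => (φ : R →+* K) ∘ T i,
    fun i j hij => hQ (funext fun t => ?_), fun i => ?_, fun i => ?_⟩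
  · have hzero : φ (T i t - T j t) = 0 := by
      rw [map_sub, sub_eq_zero]
      exact congrFun hij t
    rw [hφ _ (.inr ⟨((i, j), t), rfl⟩), map_sub, sub_eq_zero] at hzero
    rw [← hψT i, ← hψT j]
    exact hzero
  · have hψi := hcrit i
    rw [← hψG, ← hψT, isNondegCritAt_map_iff] at hψi
    rw [← hφG, isNondegCritAt_map_iff]
    exact ⟨fun j => (hφ _ (.inl (.inl (.inr ⟨(i, j), rfl⟩)))).2 (hψi.1 j),
      mt (hφ _ (.inl (.inr ⟨i, rfl⟩))).1 hψi.2⟩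
  · rw [← hφG, ← hψG, ← hψT, eval_comp_map, eval_comp_map]
    exact hφ _ (.inl (.inl (.inl ⟨i, rfl⟩)))

end Transfer

section Chebyshev

open Polynomial hiding C X

variable (R : Type*) [CommRing R]

theorem isMonicOfDegree_chebyshevS [Nontrivial R] (n : ℕ) :
    IsMonicOfDegree (Chebyshev.S R n) n := by
  induction n using Nat.twoStepInduction with
  | zero => simp
  | one => simpa using isMonicOfDegree_X R
  | more n ih₀ ih₁ =>
    have hrec := Chebyshev.S_add_two R n
    push_cast at ih₁ ⊢
    rw [hrec, show n + 2 = 1 + (n + 1) by ring]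
    exact ((isMonicOfDegree_X R).mul ih₁).sub (by rw [ih₀.natDegree_eq]; omega)

theorem isMonicOfDegree_chebyshevC [Nontrivial R] {n : ℕ} (hn : 0 < n) :
    IsMonicOfDegree (Chebyshev.C R n) n := by
  have hC : Chebyshev.C R n = Chebyshev.S R n - Chebyshev.S R (n - 2) := by
    linear_combination Chebyshev.C_eq_S_sub_X_mul_S R n + Chebyshev.S_eq R n
  rw [hC]
  refine (isMonicOfDegree_chebyshevS R n).sub ?_
  rcases eq_or_lt_of_le (Nat.succ_le_of_lt hn) with rfl | hn
  · simp
  · obtain ⟨m, rfl⟩ := Nat.exists_eq_add_of_le' hn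
    have hm := (isMonicOfDegree_chebyshevS R m).natDegree_eq
    push_cast
    rw [add_sub_assoc]
    simp [hm]

theorem derivative_chebyshevC (n : ℕ) :
    derivative (Chebyshev.C R n) = n * Chebyshev.S R (n - 1) := by
  induction n using Nat.twoStepInduction with
  | zero => simp
  | one => simp
  | more n ih₀ ih₁ =>
    have hrec := congrArg derivative (Chebyshev.C_add_two R n)
    have hC := Chebyshev.C_eq_S_sub_X_mul_S R (n + 1)
    have hS := Chebyshev.S_add_one R n
    push_cast at ih₁ ⊢
    rw [add_sub_cancel_right] at ih₁ hC
    rw [add_sub_assoc, show (2 : ℤ) - 1 = 1 by norm_num, hrec, derivative_sub,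
      derivative_mul, derivative_X, ih₀, ih₁]
    linear_combination hC - (n : R[X]) * hS

/-- The polynomials `S n`, monic of degree `n`, as a polynomial sequence. -/
noncomputable def chebyshevSSequence (R : Type*) [CommRing R] [Nontrivial R] :
    Polynomial.Sequence R where
  elems' n := Chebyshev.S R n
  degree_eq' n := by
    rw [degree_eq_natDegree (isMonicOfDegree_chebyshevS R n).ne_zero,
      (isMonicOfDegree_chebyshevS R n).natDegree_eq]

theorem span_chebyshevS [Nontrivial R] (m : ℕ) :
    Submodule.span R ((fun n : ℕ => Chebyshev.S R n) '' Set.Iio m) = degreeLT R m :=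
  (chebyshevSSequence R).span_degreeLT fun n _ =>
    (isMonicOfDegree_chebyshevS R n).leadingCoeff_eq ▸ isUnit_one

end Chebyshev

section ChebyshevNodes

open Polynomial hiding C X
open Real

/-- The `k`-th critical point `2 cos ((k + 1)π / n)`, for `k < n - 1`, of the Chebyshev polynomial
`C n`. -/
noncomputable def chebyshevNode (n k : ℕ) : ℝ :=
  2 * cos ((k + 1) * π / n)

variable {n k : ℕ}

theorem chebyshevAngle_mem_Ioo (hk : k < n - 1) : ((k : ℝ) + 1) * π / n ∈ Set.Ioo 0 π := by
  have hkn : (k : ℝ) + 1 < n := by exact_mod_cast Nat.add_lt_of_lt_sub hk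
  have hn : (0 : ℝ) < n := by linarith [(Nat.cast_nonneg k : (0 : ℝ) ≤ k)]
  refine ⟨by positivity, ?_⟩
  rw [div_lt_iff₀ hn, mul_comm π]
  exact mul_lt_mul_of_pos_right hkn pi_pos

theorem sin_chebyshevAngle_ne_zero (hk : k < n - 1) : sin ((k + 1) * π / n) ≠ 0 :=
  (sin_pos_of_mem_Ioo (chebyshevAngle_mem_Ioo hk)).ne'

theorem mul_chebyshevAngle (hk : k < n - 1) :
    (n : ℝ) * ((k + 1) * π / n) = (k + 1 : ℕ) * π := by
  have hn : (n : ℝ) ≠ 0 := by exact_mod_cast (by omega : n ≠ 0)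
  rw [mul_div_cancel₀ _ hn, Nat.cast_succ]

theorem injOn_chebyshevNode (n : ℕ) : Set.InjOn (chebyshevNode n) (Set.Iio (n - 1)) := by
  intro j hj k hk hjk
  have hangle := injOn_cos (Set.Ioo_subset_Icc_self (chebyshevAngle_mem_Ioo hj))
    (Set.Ioo_subset_Icc_self (chebyshevAngle_mem_Ioo hk)) (mul_left_cancel₀ two_ne_zero hjk)
  have hmul := mul_chebyshevAngle hj
  rw [hangle, mul_chebyshevAngle hk] at hmul
  have hsucc : j + 1 = k + 1 := by exact_mod_cast (mul_right_cancel₀ pi_ne_zero hmul).symm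
  exact Nat.succ_injective hsucc

theorem eval_chebyshevC_chebyshevNode (hk : k < n - 1) :
    (Chebyshev.C ℝ n).eval (chebyshevNode n k) = -2 * (-1) ^ k := by
  rw [chebyshevNode, Chebyshev.C_two_mul_real_cos, Int.cast_natCast,
    mul_chebyshevAngle hk, cos_nat_mul_pi]
  ring

/-- Both sides are `sin ((i + 1)θ) / sin θ`, since `(i + 1)θ + (j + 1)θ = nθ` is a multiple
of `π`. -/
theorem eval_chebyshevS_chebyshevNode {i j : ℤ} (hij : i + j + 2 = n) (hk : k < n - 1) :
    (Chebyshev.S ℝ i).eval (chebyshevNode n k) =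
      (-1) ^ k * (Chebyshev.S ℝ j).eval (chebyshevNode n k) := by
  have hangle : ((i : ℝ) + 1) * ((k + 1) * π / n) =
      (k + 1 : ℕ) * π - ((j : ℝ) + 1) * ((k + 1) * π / n) := by
    have hij' : (i : ℝ) + j + 2 = n := by exact_mod_cast hij
    rw [← mul_chebyshevAngle hk, ← hij']
    ring
  refine mul_right_cancel₀ (sin_chebyshevAngle_ne_zero hk) ?_
  rw [chebyshevNode, mul_assoc, Chebyshev.S_two_mul_real_cos, Chebyshev.S_two_mul_real_cos,
    hangle, sin_nat_mul_pi_sub, pow_succ]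
  ring

theorem eval_chebyshevS_sub_one_chebyshevNode (hk : k < n - 1) :
    (Chebyshev.S ℝ (n - 1)).eval (chebyshevNode n k) = 0 := by
  rw [eval_chebyshevS_chebyshevNode (j := -1) (by ring) hk, Chebyshev.S_neg_one,
    Polynomial.eval_zero, mul_zero]

/-- Differentiate `S (n - 1) (2 cos θ) sin θ = sin (n θ)`. -/
theorem eval_derivative_chebyshevS_sub_one_ne_zero (hk : k < n - 1) :
    (derivative (Chebyshev.S ℝ (n - 1))).eval (chebyshevNode n k) ≠ 0 := by
  set θ : ℝ := (k + 1) * π / n with hθ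
  have hleft := ((((Chebyshev.S ℝ (n - 1)).hasDerivAt (2 * cos θ)).comp θ
    ((hasDerivAt_cos θ).const_mul 2)).mul (hasDerivAt_sin θ))
  have hright := (hasDerivAt_mul_const (n : ℝ) (x := θ)).sin
  have hfun : (fun t => sin (t * n)) =
      (fun t => (Chebyshev.S ℝ (n - 1)).eval (2 * cos t)) * sin := funext fun t => by
    rw [Pi.mul_apply, Chebyshev.S_two_mul_real_cos, mul_comm]
    push_cast
    rw [sub_add_cancel]
  rw [hfun] at hright
  have hderiv := hleft.unique hright
  have hroot := eval_chebyshevS_sub_one_chebyshevNode hk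
  rw [chebyshevNode, ← hθ] at hroot ⊢
  intro hzero
  rw [Function.comp_apply, hroot, hzero, mul_comm θ, hθ, mul_chebyshevAngle hk, cos_nat_mul_pi]
    at hderiv
  have hn : (n : ℝ) ≠ 0 := by exact_mod_cast (by omega : n ≠ 0)
  simp [hn] at hderiv

theorem eval_derivative_chebyshevC_chebyshevNode (hk : k < n - 1) :
    (derivative (Chebyshev.C ℝ n)).eval (chebyshevNode n k) = 0 := by
  rw [derivative_chebyshevC, Polynomial.eval_mul, eval_chebyshevS_sub_one_chebyshevNode hk,
    mul_zero]

theorem eval_derivative_derivative_chebyshevC_ne_zero (hk : k < n - 1) :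
    (derivative (derivative (Chebyshev.C ℝ n))).eval (chebyshevNode n k) ≠ 0 := by
  have hn : n ≠ 0 := by omega
  rw [derivative_chebyshevC, derivative_natCast_mul, Polynomial.eval_mul, Polynomial.eval_natCast]
  exact mul_ne_zero (Nat.cast_ne_zero.2 hn) (eval_derivative_chebyshevS_sub_one_ne_zero hk)

end ChebyshevNodes

section Separated

variable {σ R : Type*} [CommRing R]

theorem toMvPolynomial_eq_sum (i : σ) (f : Polynomial R) :
    f.toMvPolynomial i = ∑ s ∈ Finset.range (f.natDegree + 1), f.coeff s • X i ^ s := by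
  rw [Polynomial.toMvPolynomial, Polynomial.aeval_eq_sum_range]

theorem toMvPolynomial_mul_mem_weightLT {w : σ → ℕ} {N : ℕ} {i j : σ} {f g : Polynomial R}
    (h : f.natDegree * w i + g.natDegree * w j < N) :
    f.toMvPolynomial i * g.toMvPolynomial j ∈ weightLT R w N := by
  rw [toMvPolynomial_eq_sum, toMvPolynomial_eq_sum, Finset.sum_mul_sum]
  refine Submodule.sum_mem _ fun s hs => Submodule.sum_mem _ fun t ht => ?_
  rw [smul_mul_smul_comm, X_pow_eq_monomial, X_pow_eq_monomial, monomial_mul]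
  refine Submodule.smul_mem _ _ (monomial_mem_weightLT (lt_of_le_of_lt ?_ h) _)
  rw [map_add, Finsupp.weight_single, Finsupp.weight_single]
  exact add_le_add (Nat.mul_le_mul_right _ (Finset.mem_range_succ_iff.1 hs))
    (Nat.mul_le_mul_right _ (Finset.mem_range_succ_iff.1 ht))

theorem toMvPolynomial_mem_weightLT {w : σ → ℕ} {N : ℕ} {i : σ} {f : Polynomial R}
    (h : f.natDegree * w i < N) : f.toMvPolynomial i ∈ weightLT R w N := by
  have hmul := toMvPolynomial_mul_mem_weightLT (w := w) (N := N) (i := i) (j := i) (f := f) (g := 1)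
    (by simpa using h)
  rwa [map_one, mul_one] at hmul

theorem pderiv_toMvPolynomial [DecidableEq σ] (i j : σ) (f : Polynomial R) :
    pderiv i (f.toMvPolynomial j) =
      if i = j then (Polynomial.derivative f).toMvPolynomial i else 0 := by
  rw [Polynomial.toMvPolynomial, Polynomial.toMvPolynomial, Derivation.map_aeval]
  rcases eq_or_ne i j with rfl | hij
  · simp
  · simp [hij, pderiv_X_of_ne hij.symm]

theorem pderiv_sum_toMvPolynomial [Fintype σ] (i : σ) (f : σ → Polynomial R) :
    pderiv i (∑ j, (f j).toMvPolynomial j) =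
      (Polynomial.derivative (f i)).toMvPolynomial i := by
  classical
  simp [pderiv_toMvPolynomial]

theorem isNondegCritAt_sum_toMvPolynomial [IsDomain R] [Fintype σ] [DecidableEq σ]
    {f : σ → Polynomial R} {P : σ → R} (hcrit : ∀ i, (f i).derivative.eval (P i) = 0)
    (hnondeg : ∀ i, (f i).derivative.derivative.eval (P i) ≠ 0) :
    IsNondegCritAt (∑ i, (f i).toMvPolynomial i) P where
  eval_pderiv i := by rw [pderiv_sum_toMvPolynomial, eval_toMvPolynomial, hcrit]
  eval_hessian_det := by
    have hhess : hessian (∑ i, (f i).toMvPolynomial i) =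
        Matrix.diagonal fun i => (f i).derivative.derivative.toMvPolynomial i := by
      ext1 i j
      rw [hessian, Matrix.of_apply, pderiv_sum_toMvPolynomial, pderiv_toMvPolynomial,
        Matrix.diagonal_apply]
      split_ifs with hij
      · rw [hij]
      · rfl
    rw [hhess, Matrix.det_diagonal, map_prod]
    simpa only [eval_toMvPolynomial] using Finset.prod_ne_zero_iff.2 fun i _ => hnondeg i

end Separated

section ChebyshevGrid

/-- The Weierstraß polynomial `C p (Y) - C q (X)` of type `p, q`, whose curve has at least
`(p - 1) * (q - 1) / 2` nodes. -/
noncomputable def chebyshevPoly (p q : ℕ) : MvPolynomial (Fin 2) ℝ :=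
  ∑ i, (![-Polynomial.Chebyshev.C ℝ q, Polynomial.Chebyshev.C ℝ p] i).toMvPolynomial i

/-- The critical points of `chebyshevPoly p q`, indexed by those of `C q` and of `C p`. -/
noncomputable def chebyshevGrid (p q : ℕ) (e : Fin (q - 1) × Fin (p - 1)) : Fin 2 → ℝ :=
  ![chebyshevNode q e.1, chebyshevNode p e.2]

variable {p q : ℕ}

theorem chebyshevPoly_sub_mem_weightLT (hp : 0 < p) (hq : 0 < q) :
    chebyshevPoly p q - (X 1 ^ p - X 0 ^ q) ∈ weightLT ℝ ![p, q] (p * q) := by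
  have hlow {n : ℕ} (hn : 0 < n) :
      (Polynomial.Chebyshev.C ℝ n - Polynomial.X ^ n).natDegree < n :=
    (isMonicOfDegree_chebyshevC ℝ hn).natDegree_sub_X_pow hn.ne'
  have hsplit : chebyshevPoly p q - (X 1 ^ p - X 0 ^ q) =
      (Polynomial.Chebyshev.C ℝ p - Polynomial.X ^ p).toMvPolynomial (1 : Fin 2) -
        (Polynomial.Chebyshev.C ℝ q - Polynomial.X ^ q).toMvPolynomial 0 := by
    simp only [chebyshevPoly, Fin.sum_univ_two, Matrix.cons_val_zero, Matrix.cons_val_one,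
      map_neg, map_sub, map_pow, Polynomial.toMvPolynomial_X]
    ring
  rw [hsplit]
  refine sub_mem (toMvPolynomial_mem_weightLT ?_) (toMvPolynomial_mem_weightLT ?_)
  · exact Nat.mul_lt_mul_of_pos_right (hlow hp) hq
  · rw [mul_comm p]
    exact Nat.mul_lt_mul_of_pos_right (hlow hq) hp

theorem chebyshevGrid_injective (p q : ℕ) : Function.Injective (chebyshevGrid p q) := by
  intro e e' h
  exact Prod.ext
    (Fin.ext (injOn_chebyshevNode q e.1.2 e'.1.2 (congrFun h 0)))
    (Fin.ext (injOn_chebyshevNode p e.2.2 e'.2.2 (congrFun h 1)))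

theorem isNondegCritAt_chebyshevGrid (e : Fin (q - 1) × Fin (p - 1)) :
    IsNondegCritAt (chebyshevPoly p q) (chebyshevGrid p q e) := by
  refine isNondegCritAt_sum_toMvPolynomial (Fin.forall_fin_two.2 ⟨?_, ?_⟩)
    (Fin.forall_fin_two.2 ⟨?_, ?_⟩)
  · simpa [chebyshevGrid] using eval_derivative_chebyshevC_chebyshevNode e.1.2
  · exact eval_derivative_chebyshevC_chebyshevNode e.2.2
  · simpa [chebyshevGrid] using eval_derivative_derivative_chebyshevC_ne_zero e.1.2
  · exact eval_derivative_derivative_chebyshevC_ne_zero e.2.2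

theorem eval_chebyshevGrid_eq_zero_iff (e : Fin (q - 1) × Fin (p - 1)) :
    eval (chebyshevGrid p q e) (chebyshevPoly p q) = 0 ↔ Even ((e.1 : ℕ) + e.2) := by
  have heval : eval (chebyshevGrid p q e) (chebyshevPoly p q) =
      2 * ((-1) ^ (e.1 : ℕ) - (-1) ^ (e.2 : ℕ)) := by
    have hx := eval_chebyshevC_chebyshevNode e.1.2
    have hy := eval_chebyshevC_chebyshevNode e.2.2
    simp only [chebyshevPoly, chebyshevGrid, Fin.sum_univ_two, map_add, eval_toMvPolynomial,
      Matrix.cons_val_zero, Matrix.cons_val_one, Polynomial.eval_neg, hx, hy]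
    ring
  have hsq : (-1 : ℝ) ^ (e.2 : ℕ) * (-1) ^ (e.2 : ℕ) = 1 := by
    rw [← pow_add, Even.neg_one_pow ⟨_, rfl⟩]
  rw [heval, ← neg_one_pow_eq_one_iff_even (R := ℝ) (by norm_num), pow_add]
  refine ⟨fun h => ?_, fun h => ?_⟩
  · linear_combination (-1) ^ (e.2 : ℕ) / 2 * h + hsq
  · linear_combination 2 * (-1) ^ (e.2 : ℕ) * h - 2 * (-1) ^ (e.1 : ℕ) * hsq

/-- The nodes of the curve `chebyshevPoly p q = 0`, see `eval_chebyshevGrid_eq_zero_iff`. -/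
def evenChebyshevGrid (p q : ℕ) : Set (Fin 2 → ℝ) :=
  chebyshevGrid p q '' {e | Even ((e.1 : ℕ) + e.2)}

/-- If the weight of `S i (X) S j (Y)` is too large, the reflections `i ↦ q - 2 - i` and
`j ↦ p - 2 - j` lower it; together they do not change the values at the points of value zero.
Equality `(i + 1)p + (j + 1)q = pq` is excluded by coprimality. -/
theorem chebyshevS_mul_chebyshevS_mem (hco : p.Coprime q) {i j : ℕ} (hi : i < q - 1)
    (hj : j < p - 1) :
    (Polynomial.Chebyshev.S ℝ i).toMvPolynomial 0 * (Polynomial.Chebyshev.S ℝ j).toMvPolynomial 1 ∈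
      weightLT ℝ ![p, q] (p * q) ⊔
        (vanishingIdeal ℝ (evenChebyshevGrid p q)).restrictScalars ℝ := by
  have hlow {i j : ℕ} (h : i * p + j * q < p * q) :
      (Polynomial.Chebyshev.S ℝ i).toMvPolynomial 0 *
        (Polynomial.Chebyshev.S ℝ j).toMvPolynomial 1 ∈ weightLT ℝ ![p, q] (p * q) := by
    refine toMvPolynomial_mul_mem_weightLT ?_
    rwa [(isMonicOfDegree_chebyshevS ℝ i).natDegree_eq,
      (isMonicOfDegree_chebyshevS ℝ j).natDegree_eq]
  rcases lt_trichotomy ((i + 1) * p + (j + 1) * q) (p * q) with h | h | h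
  · exact Submodule.mem_sup_left (hlow (by nlinarith))
  · have hdvd : q ∣ i + 1 := hco.symm.dvd_of_dvd_mul_right <|
      (Nat.dvd_add_left (dvd_mul_left q (j + 1))).1 (h ▸ dvd_mul_left q p)
    exact absurd (Nat.le_of_dvd i.succ_pos hdvd) (by omega)
  · obtain ⟨i', hi'⟩ : ∃ i', i + i' + 2 = q := ⟨q - 2 - i, by omega⟩
    obtain ⟨j', hj'⟩ : ∃ j', j + j' + 2 = p := ⟨p - 2 - j, by omega⟩
    have hreflect : i' * p + j' * q < p * q := by
      subst hi' hj'
      nlinarith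
    rw [← sub_add_cancel ((Polynomial.Chebyshev.S ℝ i).toMvPolynomial 0 * _)
      ((Polynomial.Chebyshev.S ℝ i').toMvPolynomial 0 *
        (Polynomial.Chebyshev.S ℝ j').toMvPolynomial 1)]
    refine add_mem (Submodule.mem_sup_right ?_) (Submodule.mem_sup_left (hlow hreflect))
    rw [Submodule.restrictScalars_mem, mem_vanishingIdeal_iff]
    rintro _ ⟨e, he, rfl⟩
    have hx := eval_chebyshevS_chebyshevNode (i := i) (j := i') (mod_cast hi') e.1.2
    have hy := eval_chebyshevS_chebyshevNode (i := j) (j := j') (mod_cast hj') e.2.2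
    have hsign : (-1 : ℝ) ^ (e.1 : ℕ) * (-1) ^ (e.2 : ℕ) = 1 := by
      rw [← pow_add]
      exact he.neg_one_pow
    simp only [aeval_eq_eval, chebyshevGrid, map_sub, map_mul, eval_toMvPolynomial,
      Matrix.cons_val_zero, Matrix.cons_val_one, hx, hy]
    linear_combination (Polynomial.Chebyshev.S ℝ i').eval (chebyshevNode q e.1) *
      (Polynomial.Chebyshev.S ℝ j').eval (chebyshevNode p e.2) * hsign

theorem toMvPolynomial_mul_toMvPolynomial_mem (hco : p.Coprime q) {f g : Polynomial ℝ}
    (hf : f.degree < (q - 1 : ℕ)) (hg : g.degree < (p - 1 : ℕ)) :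
    f.toMvPolynomial 0 * g.toMvPolynomial 1 ∈
      weightLT ℝ ![p, q] (p * q) ⊔
        (vanishingIdeal ℝ (evenChebyshevGrid p q)).restrictScalars ℝ := by
  rw [← Polynomial.mem_degreeLT, ← span_chebyshevS] at hf hg
  let B := (LinearMap.mul ℝ (MvPolynomial (Fin 2) ℝ)).compl₁₂
    (Polynomial.toMvPolynomial 0).toLinearMap (Polynomial.toMvPolynomial 1).toLinearMap
  have hB := Submodule.apply_mem_map₂ B hf hg
  rw [Submodule.map₂_span_span] at hB
  refine Submodule.span_le.2 ?_ hB
  rintro _ ⟨_, ⟨i, hi, rfl⟩, _, ⟨j, hj, rfl⟩, rfl⟩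
  exact chebyshevS_mul_chebyshevS_mem hco hi hj

theorem exists_mem_weightLT_eval_chebyshevGrid (hco : p.Coprime q)
    {e : Fin (q - 1) × Fin (p - 1)} (he : Even ((e.1 : ℕ) + e.2)) :
    ∃ M ∈ weightLT ℝ ![p, q] (p * q), eval (chebyshevGrid p q e) M = 1 ∧
      ∀ e' ≠ e, Even ((e'.1 : ℕ) + e'.2) → eval (chebyshevGrid p q e') M = 0 := by
  let L (n : ℕ) : Fin (n - 1) → Polynomial ℝ :=
    Lagrange.basis Finset.univ fun k => chebyshevNode n k
  have hinj (n : ℕ) : Function.Injective fun k : Fin (n - 1) => chebyshevNode n k :=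
    fun j k h => Fin.ext (injOn_chebyshevNode n j.2 k.2 h)
  have hdeg (n : ℕ) (k : Fin (n - 1)) : (L n k).degree < (n - 1 : ℕ) := by
    rw [Lagrange.degree_basis (hinj n).injOn (Finset.mem_univ k), Finset.card_fin]
    exact_mod_cast Nat.sub_lt k.pos one_pos
  have heval (n : ℕ) (j k : Fin (n - 1)) :
      (L n k).eval (chebyshevNode n j) = if j = k then 1 else 0 := by
    split_ifs with h
    · rw [h]
      exact Lagrange.eval_basis_self (hinj n).injOn (Finset.mem_univ k)
    · exact Lagrange.eval_basis_of_ne (v := fun k : Fin (n - 1) => chebyshevNode n k)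
        (Ne.symm h) (Finset.mem_univ j)
  obtain ⟨M, hM, V, hV, hMV⟩ := Submodule.mem_sup.1 <|
    toMvPolynomial_mul_toMvPolynomial_mem hco (hdeg q e.1) (hdeg p e.2)
  rw [Submodule.restrictScalars_mem, mem_vanishingIdeal_iff] at hV
  have hvalue (e' : Fin (q - 1) × Fin (p - 1)) (he' : Even ((e'.1 : ℕ) + e'.2)) :
      eval (chebyshevGrid p q e') M =
        (if e'.1 = e.1 then 1 else 0) * if e'.2 = e.2 then 1 else 0 := by
    have hVe' := hV _ ⟨e', he', rfl⟩
    rw [aeval_eq_eval] at hVe'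
    have h := congrArg (eval (chebyshevGrid p q e')) hMV
    rw [map_add, hVe', add_zero, map_mul, eval_toMvPolynomial, eval_toMvPolynomial] at h
    exact h.trans (congrArg₂ (· * ·) (heval q _ _) (heval p _ _))
  refine ⟨M, hM, by simp [hvalue e he], fun e' hne he' => ?_⟩
  rw [hvalue e' he', ite_zero_mul_ite_zero, if_neg fun h => hne (Prod.ext h.1 h.2)]

theorem half_mul_le_ncard_even_add (m n : ℕ) :
    m * n / 2 ≤ {e : Fin m × Fin n | Even ((e.1 : ℕ) + e.2)}.ncard := by
  classical
  have hsign (e : Fin m × Fin n) :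
      2 * (if Even ((e.1 : ℕ) + e.2) then 1 else 0) =
        1 + (-1 : ℤ) ^ (e.1 : ℕ) * (-1) ^ (e.2 : ℕ) := by
    rw [← pow_add]
    split_ifs with h
    · rw [h.neg_one_pow]
      rfl
    · rw [(Nat.not_even_iff_odd.1 h).neg_one_pow]
      rfl
  have hsum : 2 * ({e : Fin m × Fin n | Even ((e.1 : ℕ) + e.2)}.ncard : ℤ) =
      m * n + (∑ k ∈ Finset.range m, (-1) ^ k) * ∑ k ∈ Finset.range n, (-1) ^ k := by
    rw [Set.ncard_eq_toFinset_card', Set.toFinset_ofPred, Finset.natCast_card_filter,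
      Finset.mul_sum, Finset.sum_congr rfl fun e _ => hsign e, Finset.sum_add_distrib,
      Finset.sum_range, Finset.sum_range, Fintype.sum_mul_sum, ← Fintype.sum_prod_type']
    simp
  have hgeom (n : ℕ) : 0 ≤ ∑ k ∈ Finset.range n, (-1 : ℤ) ^ k := by
    rw [neg_one_geom_sum]
    split_ifs <;> norm_num
  have hprod := mul_nonneg (hgeom m) (hgeom n)
  rw [Nat.div_le_iff_le_mul_add_pred two_pos]
  zify
  linarith

end ChebyshevGrid

theorem exists_real_wPoly_nondegCrit {p q l : ℕ} (hp : 0 < p) (hq : 0 < q) (hco : p.Coprime q)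
    (hl : l ≤ (p - 1) * (q - 1) / 2) :
    ∃ (a : idxSet p q → ℝ) (Q : Fin (q - 1) × Fin (p - 1) → Fin 2 → ℝ), Function.Injective Q ∧
      (∀ e, IsNondegCritAt (wPoly ℝ p q a) (Q e)) ∧
      {e | eval (Q e) (wPoly ℝ p q a) = 0}.ncard = l := by
  obtain ⟨S, hS, hSl⟩ : ∃ S ⊆ {e : Fin (q - 1) × Fin (p - 1) | Even ((e.1 : ℕ) + e.2)},
      S.ncard = l :=
    Set.exists_subset_card_eq <|
      (mul_comm (p - 1) (q - 1) ▸ hl).trans (half_mul_le_ncard_even_add (q - 1) (p - 1))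
  obtain ⟨H, hH, Q, hQ, hcrit, hzero⟩ :=
    exists_partial_smoothing (chebyshevGrid_injective p q) isNondegCritAt_chebyshevGrid
      (W := weightLT ℝ ![p, q] (p * q)) (S := S)
      (by simpa only [eval_chebyshevGrid_eq_zero_iff] using
        fun e he => exists_mem_weightLT_eval_chebyshevGrid hco he)
      (fun e he => (eval_chebyshevGrid_eq_zero_iff e).2 (hS he))
  obtain ⟨a, ha⟩ : ∃ a, wPoly ℝ p q a = chebyshevPoly p q + H := by
    rw [exists_wPoly_eq_iff, add_sub_right_comm]
    exact add_mem (chebyshevPoly_sub_mem_weightLT hp hq) hH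
  exact ⟨a, Q, hQ, ha ▸ hcrit, by simp only [ha, hzero, Set.ofPred_mem_eq, hSl]⟩

section Critical

variable {k : Type} [Field k] [CharZero k] {p q : ℕ} {a : idxSet p q → k}
  {P : Fin (q - 1) × Fin (p - 1) → Fin 2 → k}

theorem mem_range_of_critical_wPoly (hp : 0 < p) (hq : 0 < q) (hP : Function.Injective P)
    (hcrit : ∀ e i, eval (P e) (pderiv i (wPoly k p q a)) = 0) {x : Fin 2 → k}
    (hx : ∀ i, eval x (pderiv i (wPoly k p q a)) = 0) : x ∈ Set.range P := by
  by_contra hxP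
  have hcard := card_critical_wPoly_le hp hq a (P := fun o : Option _ => o.elim x P)
    (Option.injective_iff.2 ⟨hP, hxP⟩) (Option.forall.2 ⟨hx, hcrit⟩)
  simp only [Fintype.card_option, Fintype.card_prod, Fintype.card_fin] at hcard
  omega

theorem setOf_isSingAt_wPoly (hp : 0 < p) (hq : 0 < q) (hP : Function.Injective P)
    (hcrit : ∀ e i, eval (P e) (pderiv i (wPoly k p q a)) = 0) :
    {x : k × k | IsSingAt k (wPoly k p q a) x} =
      piFinTwoEquiv (fun _ => k) ∘ P '' {e | eval (P e) (wPoly k p q a) = 0} := by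
  ext x
  obtain ⟨x, rfl⟩ := (piFinTwoEquiv fun _ => k).surjective x
  rw [Set.image_comp, (piFinTwoEquiv fun _ => k).injective.mem_set_image, Set.mem_ofPred_eq,
    isSingAt_piFinTwoEquiv_iff]
  constructor
  · rintro ⟨hzero, hx⟩
    obtain ⟨e, rfl⟩ := mem_range_of_critical_wPoly hp hq hP hcrit hx
    exact ⟨e, hzero, rfl⟩
  · rintro ⟨e, he, rfl⟩
    exact ⟨he, hcrit e⟩

end Critical

/-- **Theorem 1.6.** For every `l` with `1 ≤ l ≤ d = (p−1)(q−1)/2` there is a nodal curve of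
type `p,q` with exactly `l` nodes: there is a tuple `a ∈ K^I` such that every singular point
of the curve `C_a` is a node, and the set of singular points is finite of cardinality `l`. -/
theorem nodal_curve_with_exactly_l_nodes_exists
    (K : Type) [Field K] [IsAlgClosed K] [CharZero K]
    (p q : ℕ) (hp : 1 < p) (hpq : p < q) (hco : Nat.Coprime p q)
    (l : ℕ) (hl1 : 1 ≤ l) (hl2 : l ≤ (p - 1) * (q - 1) / 2) :
    ∃ a : idxSet p q → K,
      (∀ P : K × K, IsSingAt K (wPoly K p q a) P → IsNodeAt K (wPoly K p q a) P) ∧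
      {P : K × K | IsSingAt K (wPoly K p q a) P}.Finite ∧
      {P : K × K | IsSingAt K (wPoly K p q a) P}.ncard = l := by
  obtain ⟨a₀, Q, hQ, hQcrit, hcard⟩ :=
    exists_real_wPoly_nondegCrit (by omega) (by omega) hco hl2
  obtain ⟨a, P, hP, hPcrit, hzero⟩ := exists_wPoly_nondegCrit_transfer K hQ hQcrit
  have hsing := setOf_isSingAt_wPoly (by omega) (by omega) hP fun e => (hPcrit e).eval_pderiv
  refine ⟨a, fun x hx => ?_, hsing ▸ Set.toFinite _, ?_⟩
  · obtain ⟨e, he, rfl⟩ := hsing.subset hx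
    exact (isNodeAt_piFinTwoEquiv_iff _ _).2 ⟨he, hPcrit e⟩
  · rw [hsing, Set.ncard_image_of_injective _ ((piFinTwoEquiv fun _ => K).injective.comp hP)]
    simpa only [hzero] using hcard
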